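/- Let n ≥ 1, let φ ∈ C_c^∞(ℝⁿ) with ∫_{ℝⁿ} φ = 1, and for ℓ > 0 set φ_ℓ(x) = ℓ^{−n} φ(x/ℓ). Then there exists a constant C, depending only on φ and n, such that for all bounded C¹ functions f, g: ℝⁿ → ℝ with bounded gradients and all ℓ > 0, sup_{x ∈ ℝⁿ} | ((fg) * φ_ℓ)(x) − (f * φ_ℓ)(x) (g * φ_ℓ)(x) | ≤ C ℓ² ‖∇f‖_{L^∞} ‖∇g‖_{L^∞}. -/

import Mathlib

/-!
STATEMENT 15: The Constantin–E–Titi double commutator mollification estimate on ℝⁿ: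
for a mollifier φ_ℓ(x) = ℓ^{−n} φ(x/ℓ) built from φ ∈ C_c^∞(ℝⁿ) with ∫ φ = 1,
  sup_x |((fg) * φ_ℓ)(x) − (f * φ_ℓ)(x)(g * φ_ℓ)(x)| ≤ C ℓ² ‖∇f‖_{L^∞} ‖∇g‖_{L^∞},
with C depending only on φ and n.
-/

noncomputable section

open MeasureTheory

/-- Convolution of a function with the rescaled mollifier ℓ^{−n} φ(·/ℓ) on ℝⁿ. -/
def mollify (n : ℕ) (φ : (Fin n → ℝ) → ℝ) (ℓ : ℝ) (f : (Fin n → ℝ) → ℝ)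
    (x : Fin n → ℝ) : ℝ :=
  ∫ y : Fin n → ℝ, f (x - y) * ((ℓ ^ n)⁻¹ * φ (ℓ⁻¹ • y))

theorem mollify_eq (n : ℕ) (φ : (Fin n → ℝ) → ℝ) (ℓ : ℝ) (hℓ : 0 < ℓ) (f : (Fin n → ℝ) → ℝ)
    (x : Fin n → ℝ) : mollify n φ ℓ f x = ∫ z : Fin n → ℝ, f (x - ℓ • z) * φ z := by
  have h := Measure.integral_comp_inv_smul (volume : Measure (Fin n → ℝ))
    (fun z => f (x - ℓ • z) * φ z) ℓ
  have hp : 0 < ℓ ^ n := by positivity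
  simp only [smul_inv_smul₀ hℓ.ne', Module.finrank_fin_fun, abs_of_pos hp, smul_eq_mul] at h
  unfold mollify
  have h2 : ∀ y : Fin n → ℝ, f (x - y) * ((ℓ ^ n)⁻¹ * φ (ℓ⁻¹ • y))
      = (ℓ ^ n)⁻¹ * (f (x - y) * φ (ℓ⁻¹ • y)) := fun y => by ring
  simp only [h2]
  rw [integral_const_mul, h, inv_mul_cancel_left₀ hp.ne']

theorem lip_bound (n : ℕ) (f : (Fin n → ℝ) → ℝ) (hf : ContDiff ℝ 1 f)
    (hb : ∃ M : ℝ, ∀ x, ‖fderiv ℝ f x‖ ≤ M) (ℓ : ℝ) (hℓ : 0 < ℓ) (x z : Fin n → ℝ) :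
    |f (x - ℓ • z) - f x| ≤ ℓ * (⨆ y : Fin n → ℝ, ‖fderiv ℝ f y‖) * ‖z‖ := by
  obtain ⟨M, hM⟩ := hb
  have hbd : BddAbove (Set.range fun y => ‖fderiv ℝ f y‖) :=
    ⟨M, by rintro _ ⟨y, rfl⟩; exact hM y⟩
  have h := Convex.norm_image_sub_le_of_norm_fderiv_le (𝕜 := ℝ) (f := f) (s := Set.univ)
    (x := x) (y := x - ℓ • z)
    (fun y _ => (hf.differentiable one_ne_zero) y) (fun y _ => le_ciSup hbd y)
    convex_univ (Set.mem_univ _) (Set.mem_univ _)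
  rw [Real.norm_eq_abs] at h
  refine h.trans (le_of_eq ?_)
  rw [sub_sub_cancel_left, norm_neg, norm_smul, Real.norm_of_nonneg hℓ.le]
  ring

theorem mollification_double_commutator_estimate
    (n : ℕ) (hn : 1 ≤ n)
    (φ : (Fin n → ℝ) → ℝ) (hφ : ContDiff ℝ (⊤ : ℕ∞) φ) (hφc : HasCompactSupport φ)
    (hφmass : ∫ x : Fin n → ℝ, φ x = 1) :
    ∃ C : ℝ, 0 < C ∧
      ∀ (f g : (Fin n → ℝ) → ℝ) (ℓ : ℝ), 0 < ℓ →
        ContDiff ℝ 1 f → ContDiff ℝ 1 g →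
        (∃ Mf : ℝ, ∀ x, |f x| ≤ Mf) → (∃ Mg : ℝ, ∀ x, |g x| ≤ Mg) →
        (∃ Mf' : ℝ, ∀ x, ‖fderiv ℝ f x‖ ≤ Mf') → (∃ Mg' : ℝ, ∀ x, ‖fderiv ℝ g x‖ ≤ Mg') →
        ∀ x : Fin n → ℝ,
          |mollify n φ ℓ (fun y => f y * g y) x - mollify n φ ℓ f x * mollify n φ ℓ g x|
            ≤ C * ℓ ^ 2 * (⨆ y : Fin n → ℝ, ‖fderiv ℝ f y‖) *
                (⨆ y : Fin n → ℝ, ‖fderiv ℝ g y‖) := by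
  have hφ0 : Continuous φ := hφ.continuous
  have hint : ∀ h : (Fin n → ℝ) → ℝ, Continuous h → Integrable (fun z => h z * φ z) :=
    fun h hh => (hh.mul hφ0).integrable_of_hasCompactSupport hφc.mul_left
  have hinta : ∀ h : (Fin n → ℝ) → ℝ, Continuous h → Integrable (fun z => h z * |φ z|) :=
    fun h hh => (hh.mul hφ0.abs).integrable_of_hasCompactSupport
      (HasCompactSupport.mul_left (hφc.comp_left (g := fun t : ℝ => |t|) abs_zero))
  set I1 : ℝ := ∫ z : Fin n → ℝ, ‖z‖ * |φ z| with hI1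
  set I2 : ℝ := ∫ z : Fin n → ℝ, ‖z‖ ^ 2 * |φ z| with hI2
  have h1 : 0 ≤ I1 := integral_nonneg fun z => by positivity
  have h2 : 0 ≤ I2 := integral_nonneg fun z => by positivity
  refine ⟨I2 + I1 ^ 2 + 1, by positivity, ?_⟩
  intro f g ℓ hℓ hf hg _ _ hf' hg' x
  have lf := lip_bound n f hf hf' ℓ hℓ x
  have lg := lip_bound n g hg hg' ℓ hℓ x
  set A := ⨆ y : Fin n → ℝ, ‖fderiv ℝ f y‖
  set B := ⨆ y : Fin n → ℝ, ‖fderiv ℝ g y‖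
  have hA : 0 ≤ A := Real.iSup_nonneg fun _ => norm_nonneg _
  have hB : 0 ≤ B := Real.iSup_nonneg fun _ => norm_nonneg _
  rw [mollify_eq n φ ℓ hℓ, mollify_eq n φ ℓ hℓ, mollify_eq n φ ℓ hℓ]
  set F : (Fin n → ℝ) → ℝ := fun z => f (x - ℓ • z) - f x with hF
  set G : (Fin n → ℝ) → ℝ := fun z => g (x - ℓ • z) - g x with hG
  have cF : Continuous F := by
    have := hf.continuous
    fun_prop
  have cG : Continuous G := by
    have := hg.continuous
    fun_prop
  have iφ : Integrable φ := hφ0.integrable_of_hasCompactSupport hφc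
  have iF := hint F cF
  have iG := hint G cG
  have iFG := hint (fun z => F z * G z) (cF.mul cG)
  have e1 : ∫ z, f (x - ℓ • z) * φ z = (∫ z, F z * φ z) + f x := by
    have : ∀ z, f (x - ℓ • z) * φ z = F z * φ z + f x * φ z := fun z => by
      simp only [hF]; ring
    simp only [this]
    rw [integral_add iF (iφ.const_mul _), integral_const_mul, hφmass, mul_one]
  have e2 : ∫ z, g (x - ℓ • z) * φ z = (∫ z, G z * φ z) + g x := by
    have : ∀ z, g (x - ℓ • z) * φ z = G z * φ z + g x * φ z := fun z => by
      simp only [hG]; ring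
    simp only [this]
    rw [integral_add iG (iφ.const_mul _), integral_const_mul, hφmass, mul_one]
  have e3 : ∫ z, f (x - ℓ • z) * g (x - ℓ • z) * φ z
      = (∫ z, F z * G z * φ z) + g x * (∫ z, F z * φ z) + f x * (∫ z, G z * φ z)
        + f x * g x := by
    have : ∀ z, f (x - ℓ • z) * g (x - ℓ • z) * φ z
        = F z * G z * φ z + g x * (F z * φ z) + f x * (G z * φ z) + f x * g x * φ z :=
      fun z => by simp only [hF, hG]; ring
    simp only [this]
    have i1 : Integrable (fun z => F z * G z * φ z + g x * (F z * φ z)) :=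
      iFG.add (iF.const_mul _)
    have i2 : Integrable (fun z => F z * G z * φ z + g x * (F z * φ z) + f x * (G z * φ z)) :=
      i1.add (iG.const_mul _)
    rw [integral_add i2 (iφ.const_mul _), integral_add i1 (iG.const_mul _),
      integral_add iFG (iF.const_mul _)]
    simp only [integral_const_mul, hφmass, mul_one]
  have b1 : |∫ z, F z * φ z| ≤ ℓ * A * I1 := by
    rw [hI1, ← integral_const_mul, ← Real.norm_eq_abs]
    refine norm_integral_le_of_norm_le ((hinta _ continuous_norm).const_mul _)
      (Filter.Eventually.of_forall fun z => ?_)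
    rw [Real.norm_eq_abs, abs_mul, ← mul_assoc]
    exact mul_le_mul_of_nonneg_right (lf z) (abs_nonneg _)
  have b2 : |∫ z, G z * φ z| ≤ ℓ * B * I1 := by
    rw [hI1, ← integral_const_mul, ← Real.norm_eq_abs]
    refine norm_integral_le_of_norm_le ((hinta _ continuous_norm).const_mul _)
      (Filter.Eventually.of_forall fun z => ?_)
    rw [Real.norm_eq_abs, abs_mul, ← mul_assoc]
    exact mul_le_mul_of_nonneg_right (lg z) (abs_nonneg _)
  have b3 : |∫ z, F z * G z * φ z| ≤ ℓ ^ 2 * A * B * I2 := by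
    rw [hI2, ← integral_const_mul, ← Real.norm_eq_abs]
    refine norm_integral_le_of_norm_le ((hinta _ (continuous_norm.pow 2)).const_mul _)
      (Filter.Eventually.of_forall fun z => ?_)
    rw [Real.norm_eq_abs, abs_mul, ← mul_assoc, abs_mul]
    refine mul_le_mul_of_nonneg_right ?_ (abs_nonneg _)
    refine (mul_le_mul (lf z) (lg z) (abs_nonneg _) (by positivity)).trans (le_of_eq ?_)
    ring
  rw [e1, e2, e3]
  have e4 : ∀ p q r a b : ℝ, p + b * q + a * r + a * b - (q + a) * (r + b) = p - q * r := by
    intros; ring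
  rw [e4]
  have b4 := mul_le_mul b1 b2 (abs_nonneg _) (by positivity)
  rw [← abs_mul] at b4
  have b5 : 0 ≤ ℓ ^ 2 * A * B := by positivity
  refine (abs_sub _ _).trans ?_
  nlinarith

end
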